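/- arXiv:math/0702700 — 4 statements merged into one kernel-verified Lean document; each statement's English description precedes it below -/
import Mathlib

section
/- Let H be a complex Hilbert space, d ≥ 1 an integer, V a linear subspace of B(H), and φ : V → M_d(V) a linear map that is bounded with norm ‖φ‖ when M_d(V) carries the block-operator norm. Then for every m ≥ 1 and every a ∈ V, the m-th step of the quantum random walk satisfies ‖φ^{(m)}(a)‖ ≤ d^{m−1} · ‖φ‖^m · ‖a‖, where φ^{(m)}(a) ∈ M_{d^m}(V) is identified with a block operator on the ℓ²-direct sum of copies of H indexed by m-tuples in {0,…,d−1}. -/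
noncomputable section

/-- The quantum random walk generated by `φ : V → M_d(V)`: `φ^(0) = id` and
`φ^(m+1)(a)_{(𝐢,i),(𝐣,j)} = φ(φ^(m)(a)_{𝐢,𝐣})_{i,j}`, with rows and columns indexed by
`m`-tuples in `{0,…,d−1}`. -/
def qrw {V : Type*} {d : ℕ} (φ : V → Matrix (Fin d) (Fin d) V) :
    (m : ℕ) → V → Matrix (Fin m → Fin d) (Fin m → Fin d) V
  | 0 => fun a _ _ => a
  | (m + 1) => fun a I J =>
      φ (qrw φ m a (fun r => I r.castSucc) (fun r => J r.castSucc))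
        (I (Fin.last m)) (J (Fin.last m))

/-- The block operator on the `ℓ²`-direct sum induced by a matrix of bounded operators,
acting by `(T x) i = ∑ j, M i j (x j)`. -/
def blockOp {H₁ H₂ : Type*} [NormedAddCommGroup H₁] [InnerProductSpace ℂ H₁]
    [NormedAddCommGroup H₂] [InnerProductSpace ℂ H₂]
    {S : Type*} [Fintype S] [DecidableEq S]
    (M : Matrix S S (H₁ →L[ℂ] H₂)) :
    PiLp 2 (fun _ : S => H₁) →L[ℂ] PiLp 2 (fun _ : S => H₂) :=
  ∑ i : S, ∑ j : S,
    (((PiLp.continuousLinearEquiv 2 ℂ (fun _ : S => H₂)).symm :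
          (∀ _ : S, H₂) →L[ℂ] PiLp 2 (fun _ : S => H₂)).comp
      ((ContinuousLinearMap.pi
          (fun k : S => if k = i then ContinuousLinearMap.id ℂ H₂ else 0)).comp
        ((M i j).comp
          ((ContinuousLinearMap.proj j :
              (∀ _ : S, H₁) →L[ℂ] H₁).comp
            ((PiLp.continuousLinearEquiv 2 ℂ (fun _ : S => H₁)) :
              PiLp 2 (fun _ : S => H₁) →L[ℂ] (∀ _ : S, H₁))))))

/-! `φ^(m+1)(a)` is a `d^m × d^m` block matrix with blocks `φ(φ^(m)(a)_{𝐢,𝐣})`. Entries of a block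
matrix are bounded by its norm, so iterating gives `‖φ^(m)(a)_{𝐢,𝐣}‖ ≤ C^m‖a‖` without any dimension
factor, and each block has norm at most `C^(m+1)‖a‖`. By Cauchy–Schwarz an `n × n` block matrix has
norm at most `n` times the largest norm of a block; here `n = d^m`. -/

section BlockOp

variable {R S T : Type*} [Fintype R] [Fintype S] [Fintype T]

theorem sq_sum_norm_le_card_mul_norm_sq {E : Type*} [SeminormedAddCommGroup E]
    (x : PiLp 2 (fun _ : S => E)) : (∑ j, ‖x j‖) ^ 2 ≤ Fintype.card S * ‖x‖ ^ 2 := by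
  rw [PiLp.norm_sq_eq_of_L2]
  exact sq_sum_le_card_mul_sum_sq

/-- The isometric identification of an `ℓ²`-direct sum indexed by `R ≃ S × T` with the iterated
`ℓ²`-direct sum over `S` and then `T`, under which a matrix of matrices becomes a block operator
with block operators as entries. -/
def curryL2 (𝕜 E : Type*) [Semiring 𝕜] [SeminormedAddCommGroup E] [Module 𝕜 E]
    (e : R ≃ S × T) :
    PiLp 2 (fun _ : R => E) ≃ₗᵢ[𝕜] PiLp 2 (fun _ : S => PiLp 2 (fun _ : T => E)) :=
  (LinearIsometryEquiv.piLpCongrLeft 2 𝕜 E (e.trans (Equiv.sigmaEquivProd S T).symm)).trans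
    (LinearIsometryEquiv.piLpCurry 𝕜 2 fun _ _ => E)

theorem curryL2_apply {𝕜 E : Type*} [Semiring 𝕜] [SeminormedAddCommGroup E] [Module 𝕜 E]
    (e : R ≃ S × T) (x : PiLp 2 (fun _ : R => E)) (i : S) (k : T) :
    curryL2 𝕜 E e x i k = x (e.symm (i, k)) :=
  rfl

variable [DecidableEq R] [DecidableEq S] [DecidableEq T]
  {H₁ H₂ : Type*} [NormedAddCommGroup H₁] [InnerProductSpace ℂ H₁]
  [NormedAddCommGroup H₂] [InnerProductSpace ℂ H₂]

theorem blockOp_apply (M : Matrix S S (H₁ →L[ℂ] H₂)) (x : PiLp 2 (fun _ : S => H₁)) (i : S) :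
    blockOp M x i = ∑ j, M i j (x j) := by
  simp only [blockOp, _root_.sum_apply, WithLp.ofLp_sum, Finset.sum_apply]
  rw [Finset.sum_eq_single_of_mem i (Finset.mem_univ i) fun k _ hk => by simp [hk.symm]]
  simp

theorem blockOp_single_apply (M : Matrix S S (H₁ →L[ℂ] H₂)) (i j : S) (v : H₁) :
    blockOp M (PiLp.single 2 j v) i = M i j v := by
  rw [blockOp_apply, Finset.sum_eq_single_of_mem j (Finset.mem_univ j) fun k _ hk => by simp [hk]]
  simp

theorem norm_apply_le_norm_blockOp (M : Matrix S S (H₁ →L[ℂ] H₂)) (i j : S) :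
    ‖M i j‖ ≤ ‖blockOp M‖ := by
  refine (M i j).opNorm_le_bound (blockOp M).opNorm_nonneg fun v => ?_
  let x : PiLp 2 (fun _ : S => H₁) := PiLp.single 2 j v
  calc ‖M i j v‖ = ‖blockOp M x i‖ := by rw [blockOp_single_apply]
    _ ≤ ‖blockOp M x‖ := PiLp.norm_apply_le _ i
    _ ≤ ‖blockOp M‖ * ‖x‖ := (blockOp M).le_opNorm x
    _ = ‖blockOp M‖ * ‖v‖ := by rw [PiLp.norm_single]

theorem norm_blockOp_le_card_mul {M : Matrix S S (H₁ →L[ℂ] H₂)} {K : ℝ}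
    (hM : ∀ i j, ‖M i j‖ ≤ K) : ‖blockOp M‖ ≤ Fintype.card S * K := by
  have hK : 0 ≤ Fintype.card S * K := by
    simpa using Finset.sum_nonneg fun i (_ : i ∈ Finset.univ) => (norm_nonneg _).trans (hM i i)
  refine (blockOp M).opNorm_le_bound hK fun x => ?_
  have norm_row_le (i : S) : ‖blockOp M x i‖ ≤ K * ∑ j, ‖x j‖ := by
    rw [blockOp_apply, Finset.mul_sum]
    exact norm_sum_le_of_le _ fun j _ => (M i j).le_of_opNorm_le (hM i j) _
  refine le_of_sq_le_sq ?_ (by positivity)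
  calc ‖blockOp M x‖ ^ 2 = ∑ i, ‖blockOp M x i‖ ^ 2 := PiLp.norm_sq_eq_of_L2 _ _
    _ ≤ ∑ _i : S, (K * ∑ j, ‖x j‖) ^ 2 := by gcongr with i; exact norm_row_le i
    _ = Fintype.card S * (K ^ 2 * (∑ j, ‖x j‖) ^ 2) := by
      rw [Finset.sum_const, Finset.card_univ, nsmul_eq_mul, mul_pow]
    _ ≤ Fintype.card S * (K ^ 2 * (Fintype.card S * ‖x‖ ^ 2)) := by
      gcongr; exact sq_sum_norm_le_card_mul_norm_sq x
    _ = (Fintype.card S * K * ‖x‖) ^ 2 := by ring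

theorem curryL2_blockOp (e : R ≃ S × T) (M : Matrix S S (Matrix T T (H₁ →L[ℂ] H₂)))
    (x : PiLp 2 (fun _ : R => H₁)) :
    curryL2 ℂ H₂ e (blockOp ((Matrix.comp S S T T _ M).submatrix e e) x) =
      blockOp (M.map blockOp) (curryL2 ℂ H₁ e x) := by
  ext i k
  simp only [curryL2_apply, blockOp_apply, WithLp.ofLp_sum, Finset.sum_apply,
    Matrix.map_apply, Matrix.submatrix_apply, Matrix.comp_apply, Equiv.apply_symm_apply]
  rw [← e.symm.sum_comp, Fintype.sum_prod_type]
  simp only [Equiv.apply_symm_apply]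

theorem norm_blockOp_comp_submatrix (e : R ≃ S × T)
    (M : Matrix S S (Matrix T T (H₁ →L[ℂ] H₂))) :
    ‖blockOp ((Matrix.comp S S T T _ M).submatrix e e)‖ = ‖blockOp (M.map blockOp)‖ := by
  rw [← (curryL2 ℂ H₂ e).toLinearIsometry.norm_toContinuousLinearMap_comp,
    ← ContinuousLinearMap.opNorm_comp_linearIsometryEquiv _ (curryL2 ℂ H₁ e)]
  congr 1
  exact ContinuousLinearMap.ext fun x => curryL2_blockOp e M x

end BlockOp

section QuantumRandomWalk

/-- Splitting an `(m+1)`-tuple into its first `m` entries and its last one. Unlike in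
`Fin.snocEquiv`, the initial segment comes first, since it indexes the outer blocks of a step of
the quantum random walk. -/
def initLastEquiv (α : Type*) (m : ℕ) : (Fin (m + 1) → α) ≃ (Fin m → α) × α :=
  (Fin.snocEquiv fun _ => α).symm.trans (Equiv.prodComm _ _)

variable {V : Type*} {d : ℕ} (φ : V → Matrix (Fin d) (Fin d) V)

theorem qrw_succ_map {E : Type*} (ι : V → E) (m : ℕ) (a : V) :
    (qrw φ (m + 1) a).map ι =
      (Matrix.comp _ _ _ _ E ((qrw φ m a).map fun b => (φ b).map ι)).submatrix
        (initLastEquiv (Fin d) m) (initLastEquiv (Fin d) m) :=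
  rfl

variable {φ}

theorem qrw_apply_le_pow_mul {N : V → ℝ} {C : ℝ} (hC : 0 ≤ C)
    (hφ : ∀ a i j, N (φ a i j) ≤ C * N a) (m : ℕ) (a : V) (I J : Fin m → Fin d) :
    N (qrw φ m a I J) ≤ C ^ m * N a := by
  induction m with
  | zero => exact (one_mul (N a)).ge
  | succ m ih =>
    calc N (qrw φ (m + 1) a I J) ≤ C * N (qrw φ m a (Fin.init I) (Fin.init J)) := hφ _ _ _
      _ ≤ C * (C ^ m * N a) := by gcongr; exact ih _ _
      _ = C ^ (m + 1) * N a := by ring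

theorem norm_qrw_le_general {H₁ H₂ : Type*} [NormedAddCommGroup H₁] [InnerProductSpace ℂ H₁]
    [NormedAddCommGroup H₂] [InnerProductSpace ℂ H₂] (ι : V → H₁ →L[ℂ] H₂) {C : ℝ} (hC : 0 ≤ C)
    (hφ : ∀ a, ‖blockOp ((φ a).map ι)‖ ≤ C * ‖ι a‖) (m : ℕ) (a : V) :
    ‖blockOp ((qrw φ (m + 1) a).map ι)‖ ≤ (d : ℝ) ^ m * C ^ (m + 1) * ‖ι a‖ := by
  have norm_entry_le (b : V) (i j : Fin d) : ‖ι (φ b i j)‖ ≤ C * ‖ι b‖ :=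
    (norm_apply_le_norm_blockOp ((φ b).map ι) i j).trans (hφ b)
  have norm_block_le (I J : Fin m → Fin d) :
      ‖blockOp ((φ (qrw φ m a I J)).map ι)‖ ≤ C ^ (m + 1) * ‖ι a‖ :=
    calc ‖blockOp ((φ (qrw φ m a I J)).map ι)‖ ≤ C * ‖ι (qrw φ m a I J)‖ := hφ _
      _ ≤ C * (C ^ m * ‖ι a‖) := by
        gcongr; exact qrw_apply_le_pow_mul (N := fun b => ‖ι b‖) hC norm_entry_le m a I J
      _ = C ^ (m + 1) * ‖ι a‖ := by ring
  calc ‖blockOp ((qrw φ (m + 1) a).map ι)‖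
      = ‖blockOp (((qrw φ m a).map fun b => (φ b).map ι).map blockOp)‖ := by
        rw [qrw_succ_map, norm_blockOp_comp_submatrix]
    _ ≤ Fintype.card (Fin m → Fin d) * (C ^ (m + 1) * ‖ι a‖) :=
        norm_blockOp_le_card_mul norm_block_le
    _ = (d : ℝ) ^ m * C ^ (m + 1) * ‖ι a‖ := by simp [mul_assoc]

end QuantumRandomWalk

/-- If `V ⊆ B(H)` is a subspace and `φ : V → M_d(V)` is a linear map which
is bounded, with `‖φ(a)‖ ≤ C⬝‖a‖` for the block-operator norm, then the `m`-th step of the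
quantum random walk satisfies `‖φ^(m)(a)‖ ≤ d^(m−1)⬝C^m⬝‖a‖` for every `m ≥ 1`. -/
theorem norm_qrw_le
    {H : Type*} [NormedAddCommGroup H] [InnerProductSpace ℂ H] [CompleteSpace H]
    {d : ℕ} (hd : 1 ≤ d)
    (V : Submodule ℂ (H →L[ℂ] H))
    (φ : V →ₗ[ℂ] Matrix (Fin d) (Fin d) V)
    (C : ℝ) (hC : 0 ≤ C)
    (hφ : ∀ a : V, ‖blockOp (fun i j => (φ a i j : H →L[ℂ] H))‖ ≤ C * ‖a‖)
    (m : ℕ) (hm : 1 ≤ m) (a : V) :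
    ‖blockOp (fun I J => (qrw (fun v => φ v) m a I J : H →L[ℂ] H))‖ ≤
      (d : ℝ) ^ (m - 1) * C ^ m * ‖a‖ := by
  obtain ⟨n, rfl⟩ := Nat.exists_eq_add_of_le' hm
  exact norm_qrw_le_general Subtype.val hC hφ n a

end
end

section
/- Let V be a complex vector space, d ≥ 1 an integer, and φ : V → M_d(V) a linear map. Define φ̃ : V → M_d(V) by φ̃(a)_{i,j} := φ(a)_{i,j} − [i = 0][j = 0]·a (subtracting a in the (0,0) entry). For 0 ≤ m ≤ n and a strictly increasing tuple p = (p₁ < p₂ < ⋯ < p_m) of elements of {0,…,n−1}, define the linear map v_p^n : M_{d^m}(V) → M_{d^n}(V) (matrices indexed by m-tuples, respectively n-tuples, in {0,…,d−1}) by (v_p^n(X))_{𝐢,𝐣} := X_{(i_{p₁},…,i_{p_m}),(j_{p₁},…,j_{p_m})} if i_q = 0 and j_q = 0 for every q ∈ {0,…,n−1} \ {p₁,…,p_m}, and (v_p^n(X))_{𝐢,𝐣} := 0 otherwise. Then for every n ≥ 0 and every a ∈ V, φ^{(n)}(a) = Σ_{m=0}^{n} Σ_{p} v_p^n(φ̃^{(m)}(a)),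 where the inner sum runs over all strictly increasing m-tuples p in {0,…,n−1} (for m = 0 the unique empty tuple, with v_∅^n(a) the matrix equal to a at the all-zero index pair and 0 elsewhere). -/
noncomputable section

instance {m n : ℕ} : DecidablePred (fun p : Fin m → Fin n => StrictMono p) := fun p =>
  decidable_of_iff (∀ a b : Fin m, a < b → p a < p b) Iff.rfl

/-- The embedding `v_p^n` of matrices indexed by `m`-tuples into matrices indexed by
`n`-tuples determined by a strictly increasing tuple `p : Fin m → Fin n`: the entry of
`v_p^n X` at `(𝐢,𝐣)` is `X_{(i_{p₁},…,i_{p_m}),(j_{p₁},…,j_{p_m})}` if `i_q = 0 = j_q`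
for all `q` outside the range of `p`, and `0` otherwise. -/
def vEmb {V : Type*} [AddCommGroup V] {d m n : ℕ} [NeZero d] (p : Fin m → Fin n)
    (X : Matrix (Fin m → Fin d) (Fin m → Fin d) V) :
    Matrix (Fin n → Fin d) (Fin n → Fin d) V :=
  fun I J =>
    if (∀ q : Fin n, (∀ r : Fin m, p r ≠ q) → (I q = 0 ∧ J q = 0))
      then X (fun r => I (p r)) (fun r => J (p r)) else 0

/-!
Write `φ = φ̃ + δ`, where `δ v` is the `d × d` matrix with `v` in its `(0,0)` entry and `0`
elsewhere. One step of the walk is additive in its generator, and for a tuple `p` in `{0,…,n}` the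
matrix `v_p^{n+1}(φ̃^(m+1)(a))` is a `φ̃`-step if `p` takes the value `n` and a `δ`-step otherwise.
So the sums `C m n` of `v_p^n(φ̃^(m)(a))` over all `p` satisfy the Pascal rule
`C (m+1) (n+1) = δ-step (C (m+1) n) + φ̃-step (C m n)`, with `C 0 (n+1) = δ-step (C 0 n)`. Summing
over `m` gives the recursion that defines `φ^(n)`.
-/

section IncreasingTuples

theorem strictMono_snoc_iff {α : Type*} [Preorder α] {m : ℕ} {f : Fin m → α} {a : α} :
    StrictMono (Fin.snoc (α := fun _ => α) f a) ↔ StrictMono f ∧ ∀ r, f r < a := by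
  refine ⟨fun h => ⟨fun x y hxy => ?_, fun r => ?_⟩, fun ⟨hf, ha⟩ x y hxy => ?_⟩
  · simpa only [Fin.snoc_castSucc] using h (Fin.castSucc_lt_castSucc_iff.2 hxy)
  · simpa only [Fin.snoc_castSucc, Fin.snoc_last] using h (Fin.castSucc_lt_last r)
  · obtain ⟨x, rfl⟩ := Fin.exists_castSucc_eq.2 (hxy.trans_le (Fin.le_last y)).ne
    cases y using Fin.lastCases with
    | last => simpa only [Fin.snoc_castSucc, Fin.snoc_last] using ha x
    | cast y =>
      simpa only [Fin.snoc_castSucc] using hf (Fin.castSucc_lt_castSucc_iff.1 hxy)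

theorem exists_castSucc_comp_eq {ι : Type*} {n : ℕ} {p : ι → Fin (n + 1)}
    (hp : ∀ r, p r ≠ Fin.last n) : ∃ q : ι → Fin n, Fin.castSucc ∘ q = p :=
  ⟨fun r => (p r).castPred (hp r), funext fun r => Fin.castSucc_castPred (p r) (hp r)⟩

variable {m n : ℕ}

theorem strictMono_castSucc_comp_iff {p : Fin m → Fin n} :
    StrictMono (Fin.castSucc ∘ p) ↔ StrictMono p := by
  simp [StrictMono]

/-- Appends the new largest value `n` to a tuple in `{0,…,n-1}`. -/
def snocLast (p : Fin m → Fin n) : Fin (m + 1) → Fin (n + 1) :=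
  Fin.snoc (α := fun _ => Fin (n + 1)) (Fin.castSucc ∘ p) (Fin.last n)

@[simp]
theorem snocLast_castSucc (p : Fin m → Fin n) (r : Fin m) :
    snocLast p r.castSucc = (p r).castSucc :=
  Fin.snoc_castSucc (α := fun _ => Fin (n + 1)) ..

@[simp]
theorem snocLast_last (p : Fin m → Fin n) : snocLast p (Fin.last m) = Fin.last n :=
  Fin.snoc_last (α := fun _ => Fin (n + 1)) ..

theorem snocLast_injective : Function.Injective (snocLast : (Fin m → Fin n) → _) :=
  (Fin.snoc_left_injective (α := fun _ => Fin (n + 1)) _).comp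
    (Fin.castSucc_injective n).comp_left

theorem strictMono_snocLast_iff {p : Fin m → Fin n} : StrictMono (snocLast p) ↔ StrictMono p :=
  strictMono_snoc_iff.trans <|
    (and_iff_left fun r => Fin.castSucc_lt_last (p r)).trans strictMono_castSucc_comp_iff

theorem exists_castSucc_comp_or_snocLast_of_strictMono {p : Fin (m + 1) → Fin (n + 1)}
    (hp : StrictMono p) : (∃ q, Fin.castSucc ∘ q = p) ∨ ∃ q, snocLast q = p := by
  by_cases hlast : p (Fin.last m) = Fin.last n
  · right
    obtain ⟨q, hq⟩ : ∃ q : Fin m → Fin n, Fin.castSucc ∘ q = Fin.init p :=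
      exists_castSucc_comp_eq fun r => (hlast ▸ hp (Fin.castSucc_lt_last r)).ne
    exact ⟨q, by rw [snocLast, hq, ← hlast, Fin.snoc_init_self]⟩
  · left
    have hlt : p (Fin.last m) < Fin.last n := Fin.lt_last_iff_ne_last.2 hlast
    exact exists_castSucc_comp_eq fun r => ((hp.monotone (Fin.le_last r)).trans_lt hlt).ne

variable {M : Type*} [AddCommMonoid M]

theorem sum_strictMono_fin_zero (f : (Fin 0 → Fin n) → M) :
    ∑ p : {p : Fin 0 → Fin n // StrictMono p}, f p.1 = f ![] := by
  have hunique (p : {p : Fin 0 → Fin n // StrictMono p}) : p = ⟨![], Subsingleton.strictMono _⟩ :=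
    Subtype.ext (Subsingleton.elim _ _)
  exact Fintype.sum_eq_single _ fun p hp => (hp (hunique p)).elim

theorem sum_strictMono_fin_succ (f : (Fin (m + 1) → Fin (n + 1)) → M) :
    ∑ p : {p : Fin (m + 1) → Fin (n + 1) // StrictMono p}, f p.1 =
      ∑ p : {p : Fin (m + 1) → Fin n // StrictMono p}, f (Fin.castSucc ∘ p.1) +
        ∑ p : {p : Fin m → Fin n // StrictMono p}, f (snocLast p.1) := by
  let below : {p : Fin (m + 1) → Fin n // StrictMono p} →
      {p : Fin (m + 1) → Fin (n + 1) // StrictMono p} :=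
    Subtype.map _ fun _ => strictMono_castSucc_comp_iff.2
  let through : {p : Fin m → Fin n // StrictMono p} →
      {p : Fin (m + 1) → Fin (n + 1) // StrictMono p} :=
    Subtype.map snocLast fun _ => strictMono_snocLast_iff.2
  have hinj : Function.Injective (Sum.elim below through) := by
    refine (Subtype.map_injective _ (Fin.castSucc_injective n).comp_left).sumElim
      (Subtype.map_injective _ snocLast_injective) fun p q h => ?_
    have hlast : (p.1 (Fin.last m)).castSucc = snocLast q.1 (Fin.last m) :=
      congrFun (congrArg Subtype.val h) (Fin.last m)
    exact (Fin.castSucc_lt_last _).ne (hlast.trans (snocLast_last q.1))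
  have hsurj : Function.Surjective (Sum.elim below through) := by
    rintro ⟨p, hp⟩
    obtain ⟨q, rfl⟩ | ⟨q, rfl⟩ := exists_castSucc_comp_or_snocLast_of_strictMono hp
    · exact ⟨.inl ⟨q, strictMono_castSucc_comp_iff.1 hp⟩, rfl⟩
    · exact ⟨.inr ⟨q, strictMono_snocLast_iff.1 hp⟩, rfl⟩
  rw [← Function.Bijective.sum_comp ⟨hinj, hsurj⟩, Fintype.sum_sum_type]
  rfl

theorem isEmpty_strictMono_fin (h : n < m) : IsEmpty {p : Fin m → Fin n // StrictMono p} :=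
  ⟨fun p => h.not_ge <| by simpa using Fintype.card_le_of_injective p.1 p.2.injective⟩

end IncreasingTuples

section Step

variable {V : Type*} [AddCommMonoid V] {d m : ℕ}

/-- One step of the walk generated by `ψ`: `ψ` is applied to every entry, and the resulting
`d × d` block is indexed by the last coordinates. -/
def qrwStep (ψ : V →+ Matrix (Fin d) (Fin d) V) :
    Matrix (Fin m → Fin d) (Fin m → Fin d) V →+
      Matrix (Fin (m + 1) → Fin d) (Fin (m + 1) → Fin d) V where
  toFun X := .of fun I J =>
    ψ (X (Fin.init I) (Fin.init J)) (I (Fin.last m)) (J (Fin.last m))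
  map_zero' := by ext; simp
  map_add' _ _ := by ext; simp

theorem qrwStep_apply (ψ : V →+ Matrix (Fin d) (Fin d) V)
    (X : Matrix (Fin m → Fin d) (Fin m → Fin d) V) (I J : Fin (m + 1) → Fin d) :
    qrwStep ψ X I J = ψ (X (Fin.init I) (Fin.init J)) (I (Fin.last m)) (J (Fin.last m)) :=
  rfl

theorem qrw_succ (ψ : V →+ Matrix (Fin d) (Fin d) V) (a : V) :
    qrw ψ (m + 1) a = qrwStep ψ (qrw ψ m a) :=
  rfl

theorem qrwStep_add (ψ χ : V →+ Matrix (Fin d) (Fin d) V)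
    (X : Matrix (Fin m → Fin d) (Fin m → Fin d) V) :
    qrwStep (ψ + χ) X = qrwStep ψ X + qrwStep χ X :=
  rfl

variable [NeZero d]

/-- The map `δ` placing a vector in the `(0,0)` entry; it relates the generators by `φ = φ̃ + δ`. -/
def vacuumEmb : V →+ Matrix (Fin d) (Fin d) V :=
  Matrix.singleAddMonoidHom 0 0

theorem vacuumEmb_apply (v : V) (i j : Fin d) :
    vacuumEmb v i j = if i = 0 ∧ j = 0 then v else 0 := by
  simp [vacuumEmb, Matrix.single_apply, eq_comm]

end Step

section Embedding

variable {V : Type*} [AddCommGroup V] {d m n : ℕ} [NeZero d]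

theorem vEmb_id (X : Matrix (Fin n → Fin d) (Fin n → Fin d) V) : vEmb id X = X := by
  ext I J
  exact if_pos fun q hq => (hq q rfl).elim

theorem vEmb_castSucc_comp (p : Fin m → Fin n) (X : Matrix (Fin m → Fin d) (Fin m → Fin d) V) :
    vEmb (Fin.castSucc ∘ p) X = qrwStep vacuumEmb (vEmb p X) := by
  ext I J
  have hlast (r : Fin m) : (p r).castSucc ≠ Fin.last n := (Fin.castSucc_lt_last _).ne
  simp only [vEmb, qrwStep_apply, vacuumEmb_apply, ← ite_and]
  refine if_congr ?_ rfl rfl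
  simp [Fin.forall_fin_succ', hlast, Fin.init, and_comm]

theorem vEmb_snocLast (ψ : V →+ Matrix (Fin d) (Fin d) V) (p : Fin m → Fin n)
    (X : Matrix (Fin m → Fin d) (Fin m → Fin d) V) :
    vEmb (snocLast p) (qrwStep ψ X) = qrwStep ψ (vEmb p X) := by
  ext I J
  have hsupport : (∀ q, (∀ r, snocLast p r ≠ q) → I q = 0 ∧ J q = 0) ↔
      ∀ q, (∀ r, p r ≠ q) → Fin.init I q = 0 ∧ Fin.init J q = 0 := by
    simp [Fin.forall_fin_succ', Fin.init, (Fin.castSucc_lt_last _).ne']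
  have hinit (K : Fin (n + 1) → Fin d) :
      (Fin.init fun r => K (snocLast p r)) = fun r => Fin.init K (p r) := by
    simp [Fin.init_def]
  simp only [vEmb, qrwStep_apply, hsupport, hinit, snocLast_last]
  split_ifs
  · rfl
  · simp

end Embedding

section Chaos

variable {V : Type*} [AddCommGroup V] {d : ℕ} [NeZero d]
  (ψ : V →+ Matrix (Fin d) (Fin d) V) (a : V) (m n : ℕ)

/-- The order-`m` term of the Wiener–Itô decomposition after `n` steps: the sum of the embeddings
of `ψ^(m)(a)` along all strictly increasing `m`-tuples in `{0,…,n-1}`. -/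
def qrwChaos : Matrix (Fin n → Fin d) (Fin n → Fin d) V :=
  ∑ p : {p : Fin m → Fin n // StrictMono p}, vEmb p.1 (qrw ψ m a)

theorem qrwChaos_zero_zero : qrwChaos ψ a 0 0 = qrw ψ 0 a := by
  rw [qrwChaos, sum_strictMono_fin_zero (vEmb · _), Subsingleton.elim ![] id, vEmb_id]

theorem qrwChaos_zero_succ :
    qrwChaos ψ a 0 (n + 1) = qrwStep vacuumEmb (qrwChaos ψ a 0 n) := by
  rw [qrwChaos, qrwChaos, sum_strictMono_fin_zero fun p => vEmb p (qrw ψ 0 a),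
    sum_strictMono_fin_zero fun p => vEmb p (qrw ψ 0 a), ← vEmb_castSucc_comp,
    Subsingleton.elim ![] (Fin.castSucc ∘ ![])]

theorem qrwChaos_succ_succ :
    qrwChaos ψ a (m + 1) (n + 1) =
      qrwStep vacuumEmb (qrwChaos ψ a (m + 1) n) + qrwStep ψ (qrwChaos ψ a m n) := by
  rw [qrwChaos, sum_strictMono_fin_succ fun p => vEmb p (qrw ψ (m + 1) a)]
  simp only [qrwChaos, map_sum, vEmb_castSucc_comp, qrw_succ, vEmb_snocLast]

theorem qrwChaos_eq_zero_of_lt {m n : ℕ} (h : n < m) : qrwChaos ψ a m n = 0 :=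
  have := isEmpty_strictMono_fin h
  Fintype.sum_empty _

theorem sum_qrwChaos_succ :
    ∑ m ∈ Finset.range (n + 2), qrwChaos ψ a m (n + 1) =
      qrwStep (ψ + vacuumEmb) (∑ m ∈ Finset.range (n + 1), qrwChaos ψ a m n) := by
  calc
    _ = qrwStep ψ (∑ m ∈ Finset.range (n + 1), qrwChaos ψ a m n) +
        qrwStep vacuumEmb (∑ m ∈ Finset.range (n + 2), qrwChaos ψ a m n) := by
      rw [Finset.sum_range_succ', Finset.sum_range_succ' _ (n + 1)]
      simp only [qrwChaos_succ_succ, qrwChaos_zero_succ, Finset.sum_add_distrib, map_add, map_sum]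
      abel
    _ = _ := by
      rw [Finset.sum_range_succ _ (n + 1), qrwChaos_eq_zero_of_lt ψ a n.lt_succ_self, add_zero,
        qrwStep_add]

theorem qrw_add_vacuumEmb :
    qrw (ψ + vacuumEmb : V →+ _) n a = ∑ m ∈ Finset.range (n + 1), qrwChaos ψ a m n := by
  induction n with
  | zero => exact ((Finset.sum_range_one _).trans (qrwChaos_zero_zero ψ a)).symm
  | succ n ih => rw [sum_qrwChaos_succ, ← ih, qrw_succ]

end Chaos

theorem qrw_wiener_ito_general {V : Type*} [AddCommGroup V] {d : ℕ} [NeZero d]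
    (φ : V →+ Matrix (Fin d) (Fin d) V) (n : ℕ) (a : V) :
    qrw φ n a =
      ∑ m ∈ Finset.range (n + 1),
        ∑ p : {p : Fin m → Fin n // StrictMono p},
          vEmb p.1 (qrw (fun v i j => φ v i j - if i = 0 ∧ j = 0 then v else 0) m a) := by
  obtain ⟨ψ, rfl⟩ : ∃ ψ : V →+ Matrix (Fin d) (Fin d) V, φ = ψ + vacuumEmb :=
    ⟨φ - vacuumEmb, (sub_add_cancel φ vacuumEmb).symm⟩
  have hψ : (fun v i j => (ψ + vacuumEmb : V →+ Matrix (Fin d) (Fin d) V) v i j -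
      if i = 0 ∧ j = 0 then v else 0) = ψ := by
    funext v i j
    rw [AddMonoidHom.add_apply, Matrix.add_apply, vacuumEmb_apply, add_sub_cancel_right]
  rw [hψ]
  exact qrw_add_vacuumEmb ψ a n

/-- For a linear `φ : V → M_d(V)` let `φ̃` be `φ` with `a` subtracted from
the `(0,0)` entry.  Then `φ^(n)(a) = Σ_{m=0}^n Σ_{p} v_p^n(φ̃^(m)(a))`, the inner sum running
over all strictly increasing `m`-tuples `p` in `{0,…,n−1}`. -/
theorem qrw_wiener_ito
    {V : Type*} [AddCommGroup V] [Module ℂ V] {d : ℕ} [NeZero d]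
    (φ : V →ₗ[ℂ] Matrix (Fin d) (Fin d) V) (n : ℕ) (a : V) :
    qrw (fun v => φ v) n a =
      ∑ m ∈ Finset.range (n + 1),
        ∑ p : {p : Fin m → Fin n // StrictMono p},
          vEmb p.1
            (qrw
              (fun v i j => φ v i j - if i = 0 ∧ j = 0 then v else 0)
              m a) :=
  qrw_wiener_ito_general φ.toAddMonoidHom n a

end
end

section
/- Let c ∈ ℝ, h > 0, set d := √(c² + 4h) and let M be the real 2×2 matrix with rows (1, √h) and (√h, 1+c). Then for every m ∈ ℕ, the (0,0) entry of M^m equals (1 − 2h/(c+d))^m · (c+d)/(2d) + (1 − 2h/(c−d))^m · (d−c)/(2d). (Since h > 0, one has d > |c|, so c + d > 0 and c − d < 0, and the expression is well defined.) -/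
/-!
The eigenvalues of `!![1, √h; √h, 1 + c]` are `1 + (c ∓ d) / 2`, and `(c + d) (c - d) = -4h` turns
them into `1 - 2h / (c ± d)`. If `(x - r) (x - s) = 0` with scalars `r` and `s`, then `x` acts on
`x - s` as `r` and on `x - r` as `s`, so multiplying `r - s = (x - s) - (x - r)` by `x ^ n`
expresses `(r - s) x ^ n` through `r ^ n` and `s ^ n`; by Cayley–Hamilton this applies to every
`2 × 2` matrix with eigenvalues `r` and `s`.
-/

theorem pow_mul_eq_pow_smul {R A : Type*} [Monoid R] [Monoid A] [MulAction R A]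
    [SMulCommClass R A A] {x y : A} {r : R} (hxy : x * y = r • y) (n : ℕ) :
    x ^ n * y = r ^ n • y := by
  induction n with
  | zero => simp
  | succ n ih => rw [pow_succ, mul_assoc, hxy, mul_smul_comm, ih, smul_smul, pow_succ']

theorem sub_smul_pow_of_sub_mul_sub_eq_zero {R A : Type*} [CommRing R] [Ring A] [Algebra R A]
    {x : A} {r s : R} (hx : (x - algebraMap R A r) * (x - algebraMap R A s) = 0) (n : ℕ) :
    (r - s) • x ^ n = r ^ n • (x - algebraMap R A s) - s ^ n • (x - algebraMap R A r) := by
  have hx' : (x - algebraMap R A s) * (x - algebraMap R A r) = 0 := by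
    have hcomm : Commute (x - algebraMap R A r) (x - algebraMap R A s) :=
      ((Commute.refl x).sub_left (Algebra.commute_algebraMap_left r x)).sub_right
        (Algebra.commute_algebraMap_right s _)
    rwa [hcomm.eq] at hx
  have hr : x * (x - algebraMap R A s) = r • (x - algebraMap R A s) := by
    rwa [sub_mul, sub_eq_zero, ← Algebra.smul_def] at hx
  have hs : x * (x - algebraMap R A r) = s • (x - algebraMap R A r) := by
    rwa [sub_mul, sub_eq_zero, ← Algebra.smul_def] at hx'
  calc (r - s) • x ^ n
      = x ^ n * ((x - algebraMap R A s) - (x - algebraMap R A r)) := by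
        rw [sub_sub_sub_cancel_left, ← map_sub, ← Algebra.commutes, ← Algebra.smul_def]
    _ = r ^ n • (x - algebraMap R A s) - s ^ n • (x - algebraMap R A r) := by
        rw [mul_sub, pow_mul_eq_pow_smul hr, pow_mul_eq_pow_smul hs]

theorem matrix_sub_mul_sub_eq_zero_of_trace_of_det {R : Type*} [CommRing R]
    {M : Matrix (Fin 2) (Fin 2) R} {r s : R} (htrace : M.trace = r + s) (hdet : M.det = r * s) :
    (M - algebraMap R _ r) * (M - algebraMap R _ s) = 0 := by
  nontriviality R
  have hcharpoly : M.charpoly =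
      (Polynomial.X - Polynomial.C r) * (Polynomial.X - Polynomial.C s) := by
    rw [M.charpoly_fin_two, htrace, hdet, map_add, map_mul]
    ring
  simpa only [hcharpoly, map_mul, map_sub, Polynomial.aeval_X, Polynomial.aeval_C]
    using M.aeval_self_charpoly

theorem matrix_pow_diag_of_trace_of_det {K : Type*} [Field K] {M : Matrix (Fin 2) (Fin 2) K}
    {r s : K} (htrace : M.trace = r + s) (hdet : M.det = r * s) (hrs : r ≠ s)
    (n : ℕ) (i : Fin 2) :
    (M ^ n) i i = r ^ n * ((M i i - s) / (r - s)) + s ^ n * ((r - M i i) / (r - s)) := by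
  have hpow : (r - s) * (M ^ n) i i = r ^ n * (M i i - s) - s ^ n * (M i i - r) := by
    simpa [Matrix.algebraMap_matrix_apply] using congr_fun₂
      (sub_smul_pow_of_sub_mul_sub_eq_zero
        (matrix_sub_mul_sub_eq_zero_of_trace_of_det htrace hdet) n) i i
  have hsub : r - s ≠ 0 := sub_ne_zero.mpr hrs
  field_simp
  linear_combination hpow

section

variable {K : Type*} [Field K] [NeZero (2 : K)] {c d h : K}

theorem add_ne_zero_of_sq_eq_sq_add_four_mul (hd : d ^ 2 = c ^ 2 + 4 * h) (hh : h ≠ 0) :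
    c + d ≠ 0 := by
  have hprod : (c + d) * (d - c) = 2 * 2 * h := by linear_combination hd
  exact left_ne_zero_of_mul
    (hprod ▸ mul_ne_zero (mul_ne_zero two_ne_zero two_ne_zero) hh)

theorem two_mul_div_add_eq_of_sq_eq_sq_add_four_mul (hd : d ^ 2 = c ^ 2 + 4 * h) (hh : h ≠ 0) :
    2 * h / (c + d) = (d - c) / 2 := by
  rw [div_eq_div_iff (add_ne_zero_of_sq_eq_sq_add_four_mul hd hh) two_ne_zero]
  linear_combination -hd

theorem two_mul_div_sub_eq_of_sq_eq_sq_add_four_mul (hd : d ^ 2 = c ^ 2 + 4 * h) (hh : h ≠ 0) :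
    2 * h / (c - d) = -(c + d) / 2 := by
  rw [sub_eq_add_neg,
    two_mul_div_add_eq_of_sq_eq_sq_add_four_mul (by rwa [neg_sq]) hh, neg_add_rev, sub_eq_add_neg]

theorem matrix_pow_entry_formula_general {a p q : K} (hpq : p * q = h) (hh : h ≠ 0)
    (hd : d ^ 2 = c ^ 2 + 4 * h) (hd0 : d ≠ 0) (m : ℕ) :
    (!![a, p; q, a + c] ^ m) 0 0 =
      (a - 2 * h / (c + d)) ^ m * ((c + d) / (2 * d)) +
        (a - 2 * h / (c - d)) ^ m * ((d - c) / (2 * d)) := by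
  rw [two_mul_div_add_eq_of_sq_eq_sq_add_four_mul hd hh,
    two_mul_div_sub_eq_of_sq_eq_sq_add_four_mul hd hh]
  have h2 : (2 : K) ≠ 0 := two_ne_zero
  set r := a - (d - c) / 2 with hr
  set s := a - -(c + d) / 2 with hs
  have hrs : r - s = -d := by
    rw [hr, hs]
    field_simp
    ring
  have htrace : (!![a, p; q, a + c]).trace = r + s := by
    rw [Matrix.trace_fin_two_of, hr, hs]
    field_simp
    ring
  have hdet : (!![a, p; q, a + c]).det = r * s := by
    rw [Matrix.det_fin_two_of, hpq, hr, hs]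
    field_simp
    linear_combination hd
  have hcoeff_r : (a - s) / (r - s) = (c + d) / (2 * d) := by grind
  have hcoeff_s : (r - a) / (r - s) = (d - c) / (2 * d) := by grind
  have hne : r ≠ s := sub_ne_zero.mp (hrs ▸ neg_ne_zero.mpr hd0)
  rw [← hcoeff_r, ← hcoeff_s]
  exact matrix_pow_diag_of_trace_of_det htrace hdet hne m 0

end

/-- For `c ∈ ℝ`, `h > 0` and `d := √(c² + 4h)`, the `(0,0)` entry of the
`m`-th power of the matrix `[[1, √h], [√h, 1+c]]` equals
`(1 − 2h/(c+d))^m (c+d)/(2d) + (1 − 2h/(c−d))^m (d−c)/(2d)`. -/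
theorem matrix_pow_entry_formula (c h : ℝ) (hh : 0 < h) (m : ℕ) :
    (!![1, Real.sqrt h; Real.sqrt h, 1 + c] ^ m) 0 0 =
      (1 - 2 * h / (c + Real.sqrt (c ^ 2 + 4 * h))) ^ m *
          ((c + Real.sqrt (c ^ 2 + 4 * h)) / (2 * Real.sqrt (c ^ 2 + 4 * h))) +
        (1 - 2 * h / (c - Real.sqrt (c ^ 2 + 4 * h))) ^ m *
          ((Real.sqrt (c ^ 2 + 4 * h) - c) / (2 * Real.sqrt (c ^ 2 + 4 * h))) := by
  have hpos : 0 < c ^ 2 + 4 * h := by positivity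
  exact matrix_pow_entry_formula_general (Real.mul_self_sqrt hh.le) hh.ne'
    (Real.sq_sqrt hpos.le) (Real.sqrt_pos.mpr hpos).ne' m
end

section
/- Fix c ∈ ℝ with c ≠ 0, an integer m ≥ 0 and t ≥ 0. For h > 0, let M_h be the real 2×2 matrix with rows (1, √h) and (√h, 1+c), and let a(h) denote the (0,0) entry of (M_h)^m. Then lim_{h→0⁺} a(h)^{⌊t/h⌋} = exp(c^{−2}((1+c)^m − 1 − m·c) · t). -/
open Filter

/-!
Splitting a path of the two-state walk at its last step gives, for `M = !![1, x; y, q]`, the exact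
identity `(M ^ m) 0 0 = 1 + x * y * ∑ k < m, ∑ j < k, (M ^ j) 0 0 * q ^ (k - 1 - j)`. With
`x = y = √h` this reads `a(h) = 1 + h * (∑ k < m, ∑ j < k, q ^ j) + o(h)`, so `a(h) ^ ⌊t / h⌋` is a
compound-interest expression. For `q = 1 + c` with `c ≠ 0`, two geometric summations turn the
coefficient into `((1 + c) ^ m - 1 - m * c) / c ^ 2`; for `c = 0` it is `m * (m - 1) / 2`, the
Gaussian exponent.
-/

open Finset Topology

section Semiring

variable {R : Type*} [Semiring R]

theorem eq_add_sum_range_of_succ_eq {u f : ℕ → R} {q : R}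
    (hu : ∀ n, u (n + 1) = u n * q + f n) (n : ℕ) :
    u n = u 0 * q ^ n + ∑ j ∈ range n, f j * q ^ (n - 1 - j) := by
  induction n with
  | zero => simp
  | succ n ih =>
    have shift_exponent : ∀ j ∈ range n, f j * q ^ (n - 1 - j) * q = f j * q ^ (n - j) := by
      intro j hj
      rw [mul_assoc, ← pow_succ, show n - 1 - j + 1 = n - j by have := mem_range.1 hj; omega]
    rw [hu, ih, add_mul, mul_assoc, ← pow_succ, sum_mul, sum_congr rfl shift_exponent, add_assoc]
    simp [sum_range_succ]

theorem matrix_pow_apply_zero_one_eq_sum (M : Matrix (Fin 2) (Fin 2) R) (n : ℕ) :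
    (M ^ n) 0 1 = ∑ j ∈ range n, (M ^ j) 0 0 * M 0 1 * M 1 1 ^ (n - 1 - j) := by
  have last_step (n : ℕ) : (M ^ (n + 1)) 0 1 = (M ^ n) 0 1 * M 1 1 + (M ^ n) 0 0 * M 0 1 := by
    rw [pow_succ, Matrix.mul_apply, Fin.sum_univ_two, add_comm]
  simpa using eq_add_sum_range_of_succ_eq (u := fun n ↦ (M ^ n) 0 1) last_step n

theorem matrix_pow_apply_zero_zero_eq_sum (M : Matrix (Fin 2) (Fin 2) R) (n : ℕ) :
    (M ^ n) 0 0 = M 0 0 ^ n + ∑ k ∈ range n, (M ^ k) 0 1 * M 1 0 * M 0 0 ^ (n - 1 - k) := by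
  have last_step (n : ℕ) : (M ^ (n + 1)) 0 0 = (M ^ n) 0 0 * M 0 0 + (M ^ n) 0 1 * M 1 0 := by
    rw [pow_succ, Matrix.mul_apply, Fin.sum_univ_two]
  simpa using eq_add_sum_range_of_succ_eq (u := fun n ↦ (M ^ n) 0 0) last_step n

end Semiring

theorem matrix_pow_apply_zero_zero_eq_one_add {R : Type*} [CommSemiring R] (x y q : R) (m : ℕ) :
    (!![1, x; y, q] ^ m) 0 0 =
      1 + x * y * ∑ k ∈ range m, ∑ j ∈ range k, (!![1, x; y, q] ^ j) 0 0 * q ^ (k - 1 - j) := by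
  rw [matrix_pow_apply_zero_zero_eq_sum]
  simp only [matrix_pow_apply_zero_one_eq_sum, mul_sum, sum_mul, Matrix.of_apply,
    Matrix.cons_val_zero, Matrix.cons_val_one, one_pow, mul_one]
  congr! 3
  ring

theorem tendsto_sum_matrix_pow_apply_zero_zero {R : Type*} [CommSemiring R] [TopologicalSpace R]
    [IsTopologicalSemiring R] (q : R) (m : ℕ) :
    Tendsto (fun s : R ↦
        ∑ k ∈ range m, ∑ j ∈ range k, (!![1, s; s, q] ^ j) 0 0 * q ^ (k - 1 - j))
      (𝓝 0) (𝓝 (∑ k ∈ range m, ∑ j ∈ range k, q ^ j)) := by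
  have continuous_matrix : Continuous fun s : R ↦ !![1, s; s, q] := by fun_prop
  have continuous_entry (j : ℕ) : Continuous fun s : R ↦ (!![1, s; s, q] ^ j) 0 0 :=
    (continuous_matrix.pow j).matrix_elem 0 0
  have entry_zero (j : ℕ) : (!![1, 0; 0, q] ^ j) 0 0 = 1 := by
    simpa using matrix_pow_apply_zero_zero_eq_one_add 0 0 q j
  have continuous_sum : Continuous fun s : R ↦
      ∑ k ∈ range m, ∑ j ∈ range k, (!![1, s; s, q] ^ j) 0 0 * q ^ (k - 1 - j) :=
    continuous_finsetSum _ fun k _ ↦ continuous_finsetSum _ fun j _ ↦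
      (continuous_entry j).mul_const _
  refine continuous_sum.tendsto' _ _ ?_
  simp only [entry_zero, one_mul, sum_range_reflect (q ^ ·)]

theorem sum_geom_sum_mul_sq {R : Type*} [CommRing R] (x : R) (m : ℕ) :
    (∑ k ∈ range m, ∑ j ∈ range k, x ^ j) * (x - 1) ^ 2 = x ^ m - 1 - m * (x - 1) := by
  calc (∑ k ∈ range m, ∑ j ∈ range k, x ^ j) * (x - 1) ^ 2
      = (∑ k ∈ range m, (∑ j ∈ range k, x ^ j) * (x - 1)) * (x - 1) := by
        rw [← sum_mul, sq, mul_assoc]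
    _ = (∑ k ∈ range m, x ^ k) * (x - 1) - m * (x - 1) := by
        simp [geom_sum_mul, sub_mul]
    _ = x ^ m - 1 - m * (x - 1) := by rw [geom_sum_mul]

theorem tendsto_pow_exp_of_tendsto_mul_sub_one {ι : Type*} {l : Filter ι} {f : ι → ℝ}
    {n : ι → ℕ} {r : ℝ} (hf : Tendsto f l (𝓝 1))
    (hn : Tendsto (fun i ↦ n i * (f i - 1)) l (𝓝 r)) :
    Tendsto (fun i ↦ f i ^ n i) l (𝓝 (Real.exp r)) := by
  -- `dslope` extends `log x / (x - 1)` continuously across `x = 1`.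
  have tendsto_dslope : Tendsto (fun i ↦ dslope Real.log 1 (f i)) l (𝓝 1) := by
    have := (continuousAt_dslope_same.2 (Real.differentiableAt_log one_ne_zero)).tendsto.comp hf
    simpa [dslope_same, Function.comp_def] using this
  have log_eq (i : ι) : (f i - 1) * dslope Real.log 1 (f i) = Real.log (f i) := by
    simpa using sub_smul_dslope Real.log 1 (f i)
  have tendsto_log : Tendsto (fun i ↦ n i * Real.log (f i)) l (𝓝 r) := by
    simpa only [mul_assoc, log_eq, mul_one] using hn.mul tendsto_dslope
  refine tendsto_log.rexp.congr' ?_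
  filter_upwards [hf.eventually_const_lt one_pos] with i hi
  rw [Real.exp_nat_mul, Real.exp_log hi]

theorem tendsto_natFloor_div_mul_nhdsGT_zero {K : Type*} [Field K] [LinearOrder K]
    [IsStrictOrderedRing K] [TopologicalSpace K] [OrderTopology K] [FloorRing K] {t : K}
    (ht : 0 ≤ t) :
    Tendsto (fun h : K ↦ ⌊t / h⌋₊ * h) (𝓝[>] 0) (𝓝 t) := by
  simpa [Function.comp_def, div_eq_mul_inv] using
    (tendsto_nat_floor_mul_div_atTop ht).comp tendsto_inv_nhdsGT_zero

theorem matrix_pow_entry_tendsto_poisson_moment_general (q : ℝ) (m : ℕ) (t : ℝ) (ht : 0 ≤ t) :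
    Tendsto (fun h : ℝ ↦ ((!![1, √h; √h, q] ^ m) 0 0) ^ ⌊t / h⌋₊) (𝓝[>] 0)
      (𝓝 (Real.exp ((∑ k ∈ range m, ∑ j ∈ range k, q ^ j) * t))) := by
  let S (s : ℝ) : ℝ := ∑ k ∈ range m, ∑ j ∈ range k, (!![1, s; s, q] ^ j) 0 0 * q ^ (k - 1 - j)
  have tendsto_id : Tendsto (fun h : ℝ ↦ h) (𝓝[>] 0) (𝓝 0) := nhdsWithin_le_nhds
  have tendsto_S : Tendsto (fun h ↦ S √h) (𝓝[>] 0) (𝓝 (∑ k ∈ range m, ∑ j ∈ range k, q ^ j)) :=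
    (tendsto_sum_matrix_pow_apply_zero_zero q m).comp (by simpa using tendsto_id.sqrt)
  have entry_eq : ∀ᶠ h in 𝓝[>] 0, 1 + h * S √h = (!![1, √h; √h, q] ^ m) 0 0 := by
    filter_upwards [self_mem_nhdsWithin] with h hh
    rw [matrix_pow_apply_zero_zero_eq_one_add, Real.mul_self_sqrt (Set.mem_Ioi.1 hh).le]
  have tendsto_one : Tendsto (fun h ↦ 1 + h * S √h) (𝓝[>] 0) (𝓝 1) := by
    simpa using (tendsto_id.mul tendsto_S).const_add 1
  have tendsto_exponent : Tendsto (fun h ↦ ⌊t / h⌋₊ * (1 + h * S √h - 1)) (𝓝[>] 0)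
      (𝓝 ((∑ k ∈ range m, ∑ j ∈ range k, q ^ j) * t)) := by
    simpa only [add_sub_cancel_left, mul_assoc, mul_comm t] using
      (tendsto_natFloor_div_mul_nhdsGT_zero ht).mul tendsto_S
  refine (tendsto_pow_exp_of_tendsto_mul_sub_one tendsto_one tendsto_exponent).congr' ?_
  filter_upwards [entry_eq] with h hh
  rw [hh]

/-- For `c ≠ 0`, `m ∈ ℕ` and `t ≥ 0`, with `a(h)` the `(0,0)` entry of the
`m`-th power of `[[1, √h], [√h, 1+c]]`, one has
`lim_{h→0⁺} a(h)^⌊t/h⌋ = exp(c⁻²((1+c)^m − 1 − mc) t)`. -/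
theorem matrix_pow_entry_tendsto_poisson_moment (c : ℝ) (hc : c ≠ 0) (m : ℕ) (t : ℝ)
    (ht : 0 ≤ t) :
    Tendsto (fun h : ℝ =>
        ((!![1, Real.sqrt h; Real.sqrt h, 1 + c] ^ m) 0 0) ^ ⌊t / h⌋₊)
      (nhdsWithin 0 (Set.Ioi 0))
      (nhds (Real.exp (((1 + c) ^ m - 1 - m * c) / c ^ 2 * t))) := by
  have coefficient_eq := eq_div_of_mul_eq (pow_ne_zero 2 hc)
    (by simpa using sum_geom_sum_mul_sq (1 + c) m)
  simpa only [coefficient_eq] using matrix_pow_entry_tendsto_poisson_moment_general (1 + c) m t ht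
end
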